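/- Let G be a finite abelian group of odd order n, and let (A,η) be a reduced solution for G. Let Ĝ = Hom(G,ℂˣ) be the dual group of G (a finite abelian group of order n, written additively), with pairing ⟨g,χ⟩ = χ(g). Define Â : Ĝ×Ĝ → ℂ by Â(χ₁,χ₂) = (1/n)·Σ_{h,k∈G} A(2h,2k)·⟨h,χ₂⟩·conj(⟨k,χ₁⟩). Then (Â,η) is a reduced solution for Ĝ. -/

import Mathlib

open scoped BigOperators

/-- `d = (n + √(n²+4))/2` where `n` is the cardinality of `G`. -/
noncomputable def dR (G : Type) [Fintype G] : ℝ :=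
  ((Fintype.card G : ℝ) + Real.sqrt ((Fintype.card G : ℝ) ^ 2 + 4)) / 2

/-- The complex number `d`. -/
noncomputable def dC (G : Type) [Fintype G] : ℂ := ((dR G : ℝ) : ℂ)

/-- A reduced solution of the polynomial equations for a finite abelian group `G`
of odd order: a pair `(A, η)` satisfying the reduced equations. -/
structure ReducedSolution {G : Type} [AddCommGroup G] [Fintype G] [DecidableEq G]
    (A : G → G → ℂ) (η : ℂ) : Prop where
  cube : η ^ 3 = 1
  sum0 : ∑ h : G, A h 0 = -(starRingEnd ℂ) η / dC G
  orth : ∀ g g' k : G,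
    ∑ h : G, A (h - g) k * (starRingEnd ℂ) (A (h - g') k)
      = (if g = g' then (1 : ℂ) else 0) - (if k = (0 : G) then (1 : ℂ) else 0) / dC G
  herm : ∀ h k : G, A k h = (starRingEnd ℂ) (A h k)
  rot1 : ∀ h k : G, A h k = η * A (-k) (h - k)
  rot2 : ∀ h k : G, A h k = (starRingEnd ℂ) η * A (k - h) (-h)
  main : ∀ p q x y : G,
    ∑ l : G, A (x + y) l * A (-x) (l + p) * A (-y) (l + q)
      = A (p + x) (q + x + y) * A (q + y) (p + x + y)
        - (if x = (0 : G) then (1 : ℂ) else 0) * (if y = (0 : G) then (1 : ℂ) else 0) / dC G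

/-- The pairing `⟨g,χ⟩ = χ(g)` between a finite abelian group and its dual
`Ĝ = Hom(G, ℂˣ)` (written additively). -/
noncomputable def dualPair {G : Type} [AddCommGroup G]
    (g : G) (χ : G →+ Additive ℂˣ) : ℂ :=
  ((Additive.toMul (χ g) : ℂˣ) : ℂ)

/-- The accompanying solution on the dual group:
`Â(χ₁,χ₂) = (1/n)·Σ_{h,k} A(2h,2k)·⟨h,χ₂⟩·conj(⟨k,χ₁⟩)`. -/
noncomputable def dualA {G : Type} [AddCommGroup G] [Fintype G]
    (A : G → G → ℂ) : (G →+ Additive ℂˣ) → (G →+ Additive ℂˣ) → ℂ :=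
  fun χ₁ χ₂ => (1 / (Fintype.card G : ℂ)) *
    ∑ h : G, ∑ k : G,
      A (h + h) (k + k) * dualPair h χ₂ * (starRingEnd ℂ) (dualPair k χ₁)

section Helpers

variable {G : Type} [AddCommGroup G]

theorem dp_zero_left (χ : G →+ Additive ℂˣ) : dualPair 0 χ = 1 := by simp [dualPair]
theorem dp_zero_right (g : G) : dualPair g (0 : G →+ Additive ℂˣ) = 1 := by simp [dualPair]
theorem dp_add_left (g h : G) (χ : G →+ Additive ℂˣ) :
    dualPair (g + h) χ = dualPair g χ * dualPair h χ := by simp [dualPair]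
theorem dp_add_right (g : G) (χ ψ : G →+ Additive ℂˣ) :
    dualPair g (χ + ψ) = dualPair g χ * dualPair g ψ := by simp [dualPair]

noncomputable def dpHom (χ : G →+ Additive ℂˣ) : AddChar G ℂ where
  toFun g := dualPair g χ
  map_zero_eq_one' := dp_zero_left χ
  map_add_eq_mul' g h := dp_add_left g h χ

theorem dpHom_bij : Function.Bijective (dpHom (G := G)) := by
  constructor
  · intro χ ψ h
    ext g
    have := DFunLike.congr_fun h g
    simpa [dpHom, dualPair] using this
  · intro c
    refine ⟨AddChar.toAddMonoidHomEquiv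
      { toFun := fun g => ⟨c g, c (-g), ?_, ?_⟩, map_zero_eq_one' := ?_, map_add_eq_mul' := ?_ }, ?_⟩
    · rw [← AddChar.map_add_eq_mul]; simp
    · rw [← AddChar.map_add_eq_mul]; simp
    · ext; simp
    · intro a b; ext; simp [AddChar.map_add_eq_mul]
    · ext g; simp [dpHom, dualPair]

variable [Fintype G]

theorem dp_neg_left (g : G) (χ : G →+ Additive ℂˣ) :
    dualPair (-g) χ = (starRingEnd ℂ) (dualPair g χ) := by
  exact AddChar.map_neg_eq_conj (dpHom χ) g

theorem dp_neg_right (g : G) (χ : G →+ Additive ℂˣ) :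
    dualPair g (-χ) = (starRingEnd ℂ) (dualPair g χ) := by
  rw [← dp_neg_left]; simp [dualPair]

theorem dp_sub_right (g : G) (χ ψ : G →+ Additive ℂˣ) :
    dualPair g (χ - ψ) = dualPair g χ * (starRingEnd ℂ) (dualPair g ψ) := by
  rw [← dp_neg_right, ← dp_add_right]
  congr 1

theorem card_ne : (Fintype.card G : ℂ) ≠ 0 := by
  exact_mod_cast Fintype.card_ne_zero

theorem sum_left [DecidableEq (G →+ Additive ℂˣ)] (χ : G →+ Additive ℂˣ) :
    ∑ g : G, dualPair g χ = if χ = 0 then (Fintype.card G : ℂ) else 0 := by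
  classical
  have h := AddChar.sum_eq_ite (dpHom χ)
  have h0 : dpHom (0 : G →+ Additive ℂˣ) = 0 := by
    ext g; simp [dpHom, dp_zero_right]
  have : dpHom χ = 0 ↔ χ = 0 := by
    rw [← h0]; exact dpHom_bij.1.eq_iff
  simp only [this] at h
  exact h

variable [Fintype (G →+ Additive ℂˣ)]

theorem card_dual : Fintype.card (G →+ Additive ℂˣ) = Fintype.card G := by
  rw [Fintype.card_of_bijective (dpHom_bij (G := G))]
  exact AddChar.card_eq

theorem sum_right [DecidableEq G] (g : G) :
    ∑ χ : G →+ Additive ℂˣ, dualPair g χ = if g = 0 then (Fintype.card G : ℂ) else 0 := by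
  rw [← AddChar.sum_apply_eq_ite g]
  exact Fintype.sum_bijective dpHom dpHom_bij _ _ (fun _ => rfl)

theorem dC_dual : dC (G →+ Additive ℂˣ) = dC G := by
  simp [dC, dR, card_dual]

omit [Fintype (G →+ Additive ℂˣ)] in
theorem double_bij (hodd : Odd (Fintype.card G)) : Function.Bijective (fun g : G => g + g) := by
  have := (Nat.Coprime.symm (Nat.coprime_two_left.2 hodd))
  rw [← Nat.card_eq_fintype_card] at this
  have h := (nsmulCoprime this).bijective
  convert h using 1
  ext g; simp [two_nsmul]

omit [Fintype (G →+ Additive ℂˣ)] in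
theorem double_sol [DecidableEq G] (hodd : Odd (Fintype.card G)) {A : G → G → ℂ} {η : ℂ}
    (H : ReducedSolution A η) : ReducedSolution (fun h k => A (h + h) (k + k)) η := by
  have hb := double_bij hodd
  have hs : ∀ f : G → ℂ, ∑ g, f (g + g) = ∑ g, f g := fun f =>
    Fintype.sum_bijective _ hb _ _ (fun _ => rfl)
  have hz : ∀ g : G, g + g = 0 ↔ g = 0 := fun g => by
    have := hb.1.eq_iff (a := g) (b := 0); simpa using this
  have he : ∀ g g' : G, g + g = g' + g' ↔ g = g' := fun g g' => hb.1.eq_iff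
  refine ⟨H.cube, ?_, ?_, ?_, ?_, ?_, ?_⟩
  · have := hs (fun h => A h 0)
    simpa [H.sum0] using this
  · intro g g' k
    have := H.orth (g + g) (g' + g') (k + k)
    rw [← hs] at this
    simp only [he, hz] at this
    rw [← this]
    refine Finset.sum_congr rfl fun h _ => ?_
    rw [add_sub_add_comm, add_sub_add_comm]
  · intro h k; exact H.herm _ _
  · intro h k
    have := H.rot1 (h + h) (k + k)
    rw [add_sub_add_comm, neg_add] at this; exact this
  · intro h k
    have := H.rot2 (h + h) (k + k)
    rw [add_sub_add_comm, neg_add] at this; exact this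
  · intro p q x y
    have := H.main (p + p) (q + q) (x + x) (y + y)
    rw [← hs] at this
    simp only [hz] at this
    convert this using 1
    · refine Finset.sum_congr rfl fun l _ => ?_
      congr 1
      · congr 1
        · congr 1; abel
        · congr 1 <;> abel
      · congr 1 <;> abel
    · congr 2 <;> congr 1 <;> abel

/-- the transform without doubling -/
noncomputable def tA (B : G → G → ℂ) (χ ψ : G →+ Additive ℂˣ) : ℂ :=
  (1 / (Fintype.card G : ℂ)) *
    ∑ h : G, ∑ k : G, B h k * dualPair h ψ * (starRingEnd ℂ) (dualPair k χ)

omit [Fintype (G →+ Additive ℂˣ)] in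
theorem tA_herm (B : G → G → ℂ) (hB : ∀ h k : G, B k h = (starRingEnd ℂ) (B h k))
    (χ ψ : G →+ Additive ℂˣ) : tA B ψ χ = (starRingEnd ℂ) (tA B χ ψ) := by
  simp only [tA, map_mul, map_sum, map_div₀, map_one, map_natCast, Complex.conj_conj]
  rw [Finset.sum_comm]
  congr 1
  refine Finset.sum_congr rfl fun h _ => Finset.sum_congr rfl fun k _ => ?_
  rw [hB h k]; ring

omit [Fintype (G →+ Additive ℂˣ)] in
theorem tA_rot1 (B : G → G → ℂ) (η : ℂ) (hB : ∀ h k : G, B h k = η * B (-k) (h - k))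
    (χ ψ : G →+ Additive ℂˣ) : tA B χ ψ = η * tA B (-ψ) (χ - ψ) := by
  simp only [tA]
  rw [mul_left_comm]
  congr 1
  rw [Finset.mul_sum, Finset.sum_comm]
  refine Fintype.sum_equiv (Equiv.neg G) _ _ fun k => ?_
  rw [Finset.mul_sum]
  refine Fintype.sum_equiv (Equiv.subRight k) _ _ fun h => ?_
  simp only [Equiv.neg_apply, Equiv.subRight_apply]
  rw [hB h k]
  simp only [sub_eq_add_neg h, dp_add_left, dp_sub_right, dp_neg_left, dp_neg_right, map_mul, Complex.conj_conj]
  have h1 : (starRingEnd ℂ) (dualPair k ψ) * dualPair k ψ = 1 := by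
    rw [← dp_neg_left, ← dp_add_left, neg_add_cancel, dp_zero_left]
  linear_combination (η * B (-k) (h + -k) * dualPair h ψ * (starRingEnd ℂ) (dualPair k χ)) * (-h1)

theorem tA_sum0 [DecidableEq G] (B : G → G → ℂ) : ∑ χ : G →+ Additive ℂˣ, tA B χ 0 = ∑ h, B h 0 := by
  simp only [tA, dp_zero_right, mul_one, ← dp_neg_left]
  rw [← Finset.mul_sum, Finset.sum_comm, Finset.mul_sum]
  refine Finset.sum_congr rfl fun h _ => ?_
  rw [Finset.sum_comm]
  simp only [← Finset.mul_sum, sum_right, neg_eq_zero]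
  simp
  field_simp [card_ne (G := G)]

theorem parseval [DecidableEq G] (f g : G → ℂ) :
    ∑ χ : G →+ Additive ℂˣ, (∑ a, f a * dualPair a χ) * (∑ a, g a * dualPair a χ)
      = Fintype.card G * ∑ a, f a * g (-a) := by
  simp only [Finset.sum_mul_sum]
  rw [Finset.sum_comm, Finset.mul_sum]
  refine Finset.sum_congr rfl fun a _ => ?_
  rw [Finset.sum_comm, Finset.sum_eq_single (-a)]
  · have : ∀ χ : G →+ Additive ℂˣ, f a * dualPair a χ * (g (-a) * dualPair (-a) χ) =
        f a * g (-a) * dualPair (0 : G) χ := fun χ => by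
      rw [← add_neg_cancel a, dp_add_left]; ring
    simp only [this]
    rw [← Finset.mul_sum, sum_right, if_pos rfl]; ring
  · intro b _ hb
    have : ∀ χ : G →+ Additive ℂˣ, f a * dualPair a χ * (g b * dualPair b χ) =
        f a * g b * dualPair (a + b) χ := fun χ => by
      rw [dp_add_left]; ring
    simp only [this]
    rw [← Finset.mul_sum, sum_right, if_neg, mul_zero]
    intro h; exact hb (eq_neg_of_add_eq_zero_right h)
  · simp

theorem parseval3 [DecidableEq G] (f g h : G → ℂ) :
    ∑ χ : G →+ Additive ℂˣ, (∑ a, f a * dualPair a χ) * (∑ a, g a * dualPair a χ)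
        * (∑ a, h a * dualPair a χ)
      = Fintype.card G * ∑ a, ∑ b, f (-a - b) * g a * h b := by
  have key : ∀ χ : G →+ Additive ℂˣ, (∑ a, g a * dualPair a χ) * (∑ a, h a * dualPair a χ)
      = ∑ c, (∑ a, g a * h (c - a)) * dualPair c χ := fun χ => by
    rw [Finset.sum_mul_sum]
    simp only [Finset.sum_mul]
    rw [Finset.sum_comm (s := Finset.univ (α := G)) (f := fun c a => g a * h (c - a) * dualPair c χ)]
    refine Finset.sum_congr rfl fun a _ => ?_
    refine Fintype.sum_equiv (Equiv.addRight a) _ _ fun b => ?_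
    simp only [Equiv.coe_addRight, add_sub_cancel_right, dp_add_left]; ring
  simp only [mul_assoc, key]
  rw [parseval]
  congr 1
  rw [← Equiv.sum_comp (Equiv.neg G)]
  simp only [Equiv.neg_apply, neg_neg, Finset.mul_sum]
  rw [Finset.sum_comm]
  refine Finset.sum_congr rfl fun a _ => ?_
  refine Fintype.sum_equiv (Equiv.subRight a) _ _ fun b => ?_
  simp only [Equiv.subRight_apply]
  congr 2; abel

omit [Fintype (G →+ Additive ℂˣ)] in
theorem F_sq [DecidableEq G] [DecidableEq (G →+ Additive ℂˣ)] (B : G → G → ℂ)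
    (hB : ∀ g g' k : G, ∑ h : G, B (h - g) k * (starRingEnd ℂ) (B (h - g') k)
      = (if g = g' then (1 : ℂ) else 0) - (if k = (0 : G) then (1 : ℂ) else 0) / dC G)
    (κ : G →+ Additive ℂˣ) (b : G) :
    (∑ a, B a b * dualPair a κ) * (starRingEnd ℂ) (∑ a, B a b * dualPair a κ)
      = 1 - (if b = 0 then (1 : ℂ) else 0) * (if κ = 0 then (Fintype.card G : ℂ) else 0) / dC G := by
  have h1 : (∑ a, B a b * dualPair a κ) * (starRingEnd ℂ) (∑ a, B a b * dualPair a κ)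
      = ∑ t, dualPair t κ * ∑ a, B (a - (-t)) b * (starRingEnd ℂ) (B (a - 0) b) := by
    simp only [map_sum, map_mul, Finset.sum_mul_sum, Finset.mul_sum]
    rw [Finset.sum_comm (f := fun t a => dualPair t κ * (B (a - (-t)) b * (starRingEnd ℂ) (B (a - 0) b)))]
    refine Finset.sum_congr rfl fun a _ => ?_
    rw [Finset.sum_mul]
    refine Fintype.sum_equiv (Equiv.subRight a) _ _ fun c => ?_
    simp only [Equiv.subRight_apply, sub_neg_eq_add, add_sub_cancel, sub_zero]
    rw [sub_eq_add_neg, dp_add_left, dp_neg_left]; ring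
  rw [h1]
  simp only [hB, neg_eq_zero, mul_sub, Finset.sum_sub_distrib]
  rw [← Finset.sum_mul, sum_left]
  simp [dp_zero_left]
  split_ifs <;> ring

theorem tA_orth [DecidableEq G] [DecidableEq (G →+ Additive ℂˣ)] (B : G → G → ℂ)
    (hB : ∀ g g' k : G, ∑ h : G, B (h - g) k * (starRingEnd ℂ) (B (h - g') k)
      = (if g = g' then (1 : ℂ) else 0) - (if k = (0 : G) then (1 : ℂ) else 0) / dC G)
    (γ γ' κ : G →+ Additive ℂˣ) :
    ∑ χ, tA B (χ - γ) κ * (starRingEnd ℂ) (tA B (χ - γ') κ)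
      = (if γ = γ' then (1 : ℂ) else 0) - (if κ = 0 then (1 : ℂ) else 0) / dC G := by
  have hn := card_ne (G := G)
  set F : G → ℂ := fun b => ∑ a, B a b * dualPair a κ with hF
  have e1 : ∀ χ, tA B (χ - γ) κ =
      (1 / (Fintype.card G : ℂ)) * ∑ b, (F (-b) * dualPair (-b) γ) * dualPair b χ := fun χ => by
    rw [tA, Finset.sum_comm]
    congr 1
    refine Fintype.sum_equiv (Equiv.neg G) _ _ fun b => ?_
    simp only [Equiv.neg_apply, neg_neg, hF, Finset.sum_mul]
    refine Finset.sum_congr rfl fun a _ => ?_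
    simp only [dp_sub_right, dp_neg_left, map_mul, Complex.conj_conj]
    ring
  have e2 : ∀ χ, (starRingEnd ℂ) (tA B (χ - γ') κ) =
      (1 / (Fintype.card G : ℂ)) * ∑ b, ((starRingEnd ℂ) (F b) * dualPair (-b) γ') * dualPair b χ := fun χ => by
    rw [tA, Finset.sum_comm]
    simp only [map_mul, map_sum, map_div₀, map_one, map_natCast, Complex.conj_conj]
    congr 1
    refine Finset.sum_congr rfl fun b _ => ?_
    simp only [hF, Finset.sum_mul, map_sum]
    refine Finset.sum_congr rfl fun a _ => ?_
    simp only [dp_sub_right, dp_neg_left, map_mul]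
    ring
  have e3 : ∑ χ, tA B (χ - γ) κ * (starRingEnd ℂ) (tA B (χ - γ') κ)
      = (1 / (Fintype.card G : ℂ)) ^ 2 * ∑ χ, (∑ b, (F (-b) * dualPair (-b) γ) * dualPair b χ) *
        (∑ b, ((starRingEnd ℂ) (F b) * dualPair (-b) γ') * dualPair b χ) := by
    rw [Finset.mul_sum]
    refine Finset.sum_congr rfl fun χ _ => ?_
    rw [e1, e2]; ring
  rw [e3, parseval]
  have e4 : ∑ a, F (-a) * dualPair (-a) γ * ((starRingEnd ℂ) (F (-a)) * dualPair (- -a) γ')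
      = ∑ a, dualPair a (γ - γ') * (1 - (if a = 0 then (1 : ℂ) else 0) * (if κ = 0 then (Fintype.card G : ℂ) else 0) / dC G) := by
    refine Fintype.sum_equiv (Equiv.neg G) _ _ fun a => ?_
    rw [← F_sq B hB κ]
    simp only [Equiv.neg_apply, neg_neg, hF, dp_sub_right, dp_neg_left, map_mul, Complex.conj_conj]
    ring
  rw [e4]
  have e5 : γ - γ' = 0 ↔ γ = γ' := by
    have := sub_eq_zero (a := γ) (b := γ')
    exact this
  have e6 : ∑ a, dualPair a (γ - γ') * ((if a = 0 then (1 : ℂ) else 0) *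
      (if κ = 0 then (Fintype.card G : ℂ) else 0) / dC G) =
      (if κ = 0 then (Fintype.card G : ℂ) else 0) / dC G := by
    rw [Finset.sum_eq_single 0]
    · simp [dp_zero_left]
    · intro b _ hb; simp [hb]
    · simp
  simp only [mul_sub, Finset.sum_sub_distrib, mul_one, sum_left, e5]
  rw [← mul_sub, e6]
  split_ifs <;> field_simp <;> simp [div_eq_mul_inv]

omit [Fintype (G →+ Additive ℂˣ)] in
theorem sum3 (f g h : G → ℂ) :
    (∑ b, f b) * (∑ b, g b) * (∑ b, h b) = ∑ s, ∑ t, ∑ b, f b * g (b + s) * h (b + t) := by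
  have : ∀ s, ∑ t, ∑ b, f b * g (b + s) * h (b + t) = (∑ b, f b * g (b + s)) * ∑ b, h b := fun s => by
    rw [Finset.sum_comm, Finset.sum_mul]
    refine Finset.sum_congr rfl fun b _ => ?_
    rw [← Finset.mul_sum]
    congr 1
    exact Equiv.sum_comp (Equiv.addLeft b) h
  simp only [this]
  rw [← Finset.sum_mul, Finset.sum_comm, Finset.sum_mul]
  congr 1
  refine Finset.sum_congr rfl fun b _ => ?_
  rw [← Finset.mul_sum]
  congr 1
  exact (Equiv.sum_comp (Equiv.addLeft b) g).symm

def quadEquiv : (G × G) × (G × G) ≃ (G × G) × (G × G) where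
  toFun v := ((v.2.1 - v.1.1, v.2.2 - v.1.1 - v.1.2), (v.2.2 - v.1.2, v.2.1 - v.1.1 - v.1.2))
  invFun w := ((w.2.1 - w.1.2, w.1.1 - w.2.2), (w.1.1 + w.2.1 - w.1.2, w.1.1 + w.2.1 - w.2.2))
  left_inv v := by
    ext <;> simp <;> abel
  right_inv w := by
    ext <;> simp <;> abel

theorem tA_main [DecidableEq G] [DecidableEq (G →+ Additive ℂˣ)] (B : G → G → ℂ)
    (hB : ∀ p q x y : G,
    ∑ l : G, B (x + y) l * B (-x) (l + p) * B (-y) (l + q)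
      = B (p + x) (q + x + y) * B (q + y) (p + x + y)
        - (if x = (0 : G) then (1 : ℂ) else 0) * (if y = (0 : G) then (1 : ℂ) else 0) / dC G)
    (p q x y : G →+ Additive ℂˣ) :
    ∑ l, tA B (x + y) l * tA B (-x) (l + p) * tA B (-y) (l + q)
      = tA B (p + x) (q + x + y) * tA B (q + y) (p + x + y)
        - (if x = 0 then (1 : ℂ) else 0) * (if y = 0 then (1 : ℂ) else 0) / dC G := by
  have hn := card_ne (G := G)
  set F : (G →+ Additive ℂˣ) → G → ℂ := fun χ a => ∑ b, B a b * dualPair (-b) χ with hF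
  have e1 : ∀ χ l p, tA B χ (l + p) =
      (1 / (Fintype.card G : ℂ)) * ∑ a, (F χ a * dualPair a p) * dualPair a l := fun χ l p => by
    rw [tA]
    congr 1
    refine Finset.sum_congr rfl fun a _ => ?_
    simp only [hF, Finset.sum_mul]
    refine Finset.sum_congr rfl fun b _ => ?_
    rw [dp_add_right, dp_neg_left]; ring
  have e3 : ∑ l, tA B (x + y) l * tA B (-x) (l + p) * tA B (-y) (l + q)
      = (1 / (Fintype.card G : ℂ)) ^ 3 * ∑ l, (∑ a, (F (x + y) a * dualPair a 0) * dualPair a l) *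
        (∑ a, (F (-x) a * dualPair a p) * dualPair a l) *
        (∑ a, (F (-y) a * dualPair a q) * dualPair a l) := by
    rw [Finset.mul_sum]
    refine Finset.sum_congr rfl fun l _ => ?_
    have h0 := e1 (x + y) l 0
    have hl : l + 0 = l := by ext g; simp
    rw [hl] at h0
    rw [e1, e1, h0]; ring
  have e4 : ∀ a b, F (x + y) (-a - b) * F (-x) a * F (-y) b =
      ∑ s, ∑ t, dualPair s x * dualPair t y * (B (s - a) (t - a - b) * B (t - b) (s - a - b)
        - (if a = 0 then (1 : ℂ) else 0) * (if b = 0 then (1 : ℂ) else 0) / dC G) := fun a b => by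
    simp only [hF]
    rw [sum3]
    refine Finset.sum_congr rfl fun s _ => Finset.sum_congr rfl fun t _ => ?_
    have := hB s t (-a) (-b)
    simp only [neg_eq_zero, neg_neg] at this
    have h2 : B (s + -a) (t + -a + -b) * B (t + -b) (s + -a + -b) =
      B (s - a) (t - a - b) * B (t - b) (s - a - b) := by simp only [sub_eq_add_neg]
    rw [← h2, ← this, Finset.mul_sum]
    refine Finset.sum_congr rfl fun c _ => ?_
    rw [sub_eq_add_neg (-a) b]
    have hx : (starRingEnd ℂ) (dualPair c x) * dualPair c x = 1 := by
      rw [← dp_neg_left, ← dp_add_left, neg_add_cancel, dp_zero_left]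
    have hy : (starRingEnd ℂ) (dualPair c y) * dualPair c y = 1 := by
      rw [← dp_neg_left, ← dp_add_left, neg_add_cancel, dp_zero_left]
    simp only [dp_add_left, dp_add_right, dp_neg_left, dp_neg_right, Complex.conj_conj]
    linear_combination (B (-a + -b) c * B a (c + s) * B b (c + t) * dualPair s x * dualPair t y) *
      ((starRingEnd ℂ) (dualPair c y) * dualPair c y * hx + hy)
  rw [e3, parseval3]
  have e5 : ∑ a, ∑ b, F (x + y) (-a - b) * dualPair (-a - b) 0 * (F (-x) a * dualPair a p) *
        (F (-y) b * dualPair b q)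
      = (∑ a, ∑ b, ∑ s, ∑ t, dualPair a p * dualPair b q * dualPair s x * dualPair t y *
          (B (s - a) (t - a - b) * B (t - b) (s - a - b)))
        - (∑ s, dualPair s x) * (∑ t, dualPair t y) / dC G := by
    have h1 : (∑ s, dualPair s x) * (∑ t, dualPair t y) / dC G =
      ∑ a, ∑ b, ∑ s, ∑ t, dualPair a p * dualPair b q * dualPair s x * dualPair t y *
        ((if a = 0 then (1 : ℂ) else 0) * (if b = 0 then (1 : ℂ) else 0) / dC G) := by
      symm
      rw [Finset.sum_eq_single (0 : G), Finset.sum_eq_single (0 : G)]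
      · simp only [dp_zero_left, if_true, Finset.sum_mul_sum, Finset.sum_div]
        refine Finset.sum_congr rfl fun s _ => Finset.sum_congr rfl fun t _ => ?_
        ring
      · intro b _ hb; simp [hb]
      · simp
      · intro b _ hb; simp [hb]
      · simp
    rw [h1]
    simp only [← Finset.sum_sub_distrib]
    refine Finset.sum_congr rfl fun a _ => Finset.sum_congr rfl fun b _ => ?_
    rw [dp_zero_right]
    have : F (x + y) (-a - b) * 1 * (F (-x) a * dualPair a p) * (F (-y) b * dualPair b q) =
      dualPair a p * dualPair b q * (F (x + y) (-a - b) * F (-x) a * F (-y) b) := by ring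
    rw [this, e4]
    simp only [Finset.mul_sum]
    refine Finset.sum_congr rfl fun s _ => Finset.sum_congr rfl fun t _ => ?_
    ring
  have e6 : ∑ a, ∑ b, ∑ s, ∑ t, dualPair a p * dualPair b q * dualPair s x * dualPair t y *
          (B (s - a) (t - a - b) * B (t - b) (s - a - b)) =
      (∑ h : G, ∑ k : G, B h k * dualPair h (q + x + y) * (starRingEnd ℂ) (dualPair k (p + x))) *
      (∑ h : G, ∑ k : G, B h k * dualPair h (p + x + y) * (starRingEnd ℂ) (dualPair k (q + y))) := by
    have h4 : ∀ f : G → G → G → G → ℂ, ∑ a, ∑ b, ∑ s, ∑ t, f a b s t =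
        ∑ v : (G × G) × (G × G), f v.1.1 v.1.2 v.2.1 v.2.2 := fun f => by
      simp only [Fintype.sum_prod_type]
    have h4' : ∀ f g : G → G → ℂ, (∑ a, ∑ b, f a b) * (∑ s, ∑ t, g s t) =
        ∑ v : (G × G) × (G × G), f v.1.1 v.1.2 * g v.2.1 v.2.2 := fun f g => by
      rw [Fintype.sum_prod_type, ← Fintype.sum_prod_type', ← Fintype.sum_prod_type',
        Finset.sum_mul_sum]
    rw [h4, h4']
    rw [← Equiv.sum_comp (quadEquiv (G := G)).symm]
    refine Finset.sum_congr rfl fun w _ => ?_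
    obtain ⟨⟨h, k⟩, ⟨h', k'⟩⟩ := w
    simp only [quadEquiv, Equiv.coe_fn_symm_mk]
    have i1 : h + h' - k - (h' - k) = h := by abel
    have i2 : h + h' - k' - (h' - k) - (h - k') = k := by abel
    have i3 : h + h' - k' - (h - k') = h' := by abel
    have i4 : h + h' - k - (h' - k) - (h - k') = k' := by abel
    rw [i4, i2, i1, i3]
    simp only [sub_eq_add_neg, dp_add_left, dp_add_right, dp_neg_left, map_mul]
    ring
  rw [e5, e6, sum_left, sum_left, tA, tA]
  split_ifs <;> field_simp <;> simp

end Helpers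

/-- If `(A, η)` is a reduced solution for a finite abelian group `G` of odd order, then
`(Â, η)` is a reduced solution for the dual group `Ĝ = Hom(G, ℂˣ)`. -/
theorem dual_reducedSolution
    {G : Type} [AddCommGroup G] [Fintype G] [DecidableEq G]
    (hodd : Odd (Fintype.card G))
    [Fintype (G →+ Additive ℂˣ)] [DecidableEq (G →+ Additive ℂˣ)]
    (A : G → G → ℂ) (η : ℂ) (hsol : ReducedSolution A η) :
    ReducedSolution (dualA A) η := by
  have H := double_sol hodd hsol
  have hd : dualA A = tA (fun h k => A (h + h) (k + k)) := rfl
  rw [hd]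
  have hr := tA_rot1 _ η H.rot1
  have hη : (starRingEnd ℂ) η * η = 1 := by
    have h1 : ‖η‖ = 1 := by
      have := congrArg norm H.cube
      rw [norm_pow, norm_one] at this
      exact (pow_eq_one_iff_of_nonneg (norm_nonneg _) (by norm_num)).1 this
    rw [mul_comm, Complex.mul_conj, Complex.normSq_eq_norm_sq, h1]; simp
  refine ⟨H.cube, ?_, ?_, tA_herm _ H.herm, hr, ?_, ?_⟩
  · rw [tA_sum0, dC_dual]; exact H.sum0
  · intro γ γ' κ
    rw [dC_dual]; exact tA_orth _ H.orth γ γ' κ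
  · intro h k
    rw [hr (k - h) (-h), ← mul_assoc, hη, one_mul]
    congr 1 <;> abel
  · intro p q x y
    rw [dC_dual]; exact tA_main _ H.main p q x y
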